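/- Let G = AB be a finite group that is the product of nilpotent subgroups A and B. If A and B are both k-submodular in G, then G is supersoluble and every Sylow subgroup of G is k-submodular in G. -/

import Mathlib

open Pointwise

/-- A subgroup `H` of `K` is `n`-modularly embedded in `K` if either `H ◁ K`, or
`K/Core_K(H)` is a non-nilpotent group of order `p * q ^ n` with `|K : H| = p`
for some primes `p`, `q`. -/
def ModularlyEmbedded {G : Type*} [Group G] (n : ℕ) (H K : Subgroup G) : Prop :=
  H ≤ K ∧ ((H.subgroupOf K).Normal ∨
    ∃ p q : ℕ, p.Prime ∧ q.Prime ∧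
      ¬ Group.IsNilpotent (↥K ⧸ (H.subgroupOf K).normalCore) ∧
      Nat.card (↥K ⧸ (H.subgroupOf K).normalCore) = p * q ^ n ∧
      (H.subgroupOf K).index = p)

/-- `H` is `k`-submodular in `K` if there is a chain `H = H_0 ≤ H_1 ≤ ⋯ ≤ H_m = K`
such that `H_{i-1}` is `n_i`-modularly embedded in `H_i` for some natural number
`n_i ≤ k`, for every `i`. -/
def KSubmodularIn {G : Type*} [Group G] (k : ℕ) (H K : Subgroup G) : Prop :=
  ∃ (m : ℕ) (c : ℕ → Subgroup G), c 0 = H ∧ c m = K ∧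
    ∀ i < m, ∃ n : ℕ, 0 < n ∧ n ≤ k ∧ ModularlyEmbedded n (c i) (c (i + 1))

/-- A group is supersolvable if it has a normal series with cyclic factors
(for finite groups this is equivalent to having a chief series all of whose
factors are cyclic of prime order). -/
def IsSupersolvable (G : Type*) [Group G] : Prop :=
  ∃ (m : ℕ) (c : ℕ → Subgroup G), c 0 = ⊥ ∧ c m = ⊤ ∧
    (∀ i, (c i).Normal) ∧ (∀ i, i < m → c i ≤ c (i + 1)) ∧
    ∀ i, i < m → ∀ [_h : ((c i).subgroupOf (c (i + 1))).Normal],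
      IsCyclic (↥(c (i + 1)) ⧸ (c i).subgroupOf (c (i + 1)))

/-!
The argument is an induction on `|G|`. Let `p` be the largest prime dividing `|G|`. A non-normal
modular step has index larger than the prime `q` in the definition, so `p`-cores pass up along
modular chains, and `O_p(A)` and `O_p(B)` lie in `P = O_p(G)`. As `A` and `B` are nilpotent, `P` is
then a Sylow `p`-subgroup, and `P` has a complement `K = A₁B₁`, where `A₁` and `B₁` are the
Hall subgroups of `A` and `B` of order prime to `p`.

A minimal normal subgroup `N ≤ P` of `G` is centralized by `P`, and `P = O_p(A) O_p(B)` is contained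
in `C(A₁) C(B₁)`. By coprime action `N = C_N(A₁) C_N(B₁)`. If `C_N(K) = 1`, the norm map of `A₁`
on `N` has kernel `C_N(B₁)`, which is therefore normal in `G`; by minimality `A₁` or `B₁`
centralizes `N`, say `A₁`, and hence `G = C(N) B`. The step at which a modular chain from `B` to
`G` first swallows `N` forces `|N|` to be prime and `|G : C(N)| = q ^ m` with `m ≤ k`. For such an
`N` every subgroup `H` is embedded in `NH` by a single modular step, so both conclusions lift from
`G / N`.
-/

section Nilpotent

open Subgroup
open scoped commutatorElement

variable {G : Type*} [Group G]

theorem commutatorElement_pow_orderOf {x y : G} (hxy : ⁅x, y⁆ ∈ center G) :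
    ⁅x, y⁆ ^ orderOf x = 1 := by
  have hcomm : Commute x⁻¹ ⁅x, y⁆ := mem_center_iff.1 hxy x⁻¹
  have hconj : x⁻¹ * ⁅x, y⁆ = y * x⁻¹ * y⁻¹ := by
    rw [commutatorElement_def]
    group
  calc
    ⁅x, y⁆ ^ orderOf x = (x⁻¹ * ⁅x, y⁆) ^ orderOf x := by
      rw [hcomm.mul_pow, inv_pow, pow_orderOf_eq_one, inv_one, one_mul]
    _ = 1 := by rw [hconj, conj_pow, inv_pow, pow_orderOf_eq_one, inv_one, mul_one, mul_inv_cancel]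

theorem commute_of_coprime_orderOf [hG : Group.IsNilpotent G] {x y : G}
    (hxy : (orderOf x).Coprime (orderOf y)) : Commute x y := by
  suffices hcomm : ∀ x y : G, (orderOf x).Coprime (orderOf y) → Commute x y from hcomm x y hxy
  refine Group.nilpotent_center_quotient_ind
    (P := fun G _ _ => ∀ x y : G, (orderOf x).Coprime (orderOf y) → Commute x y) G
    (fun G _ _ x y _ => Subsingleton.elim (x * y) (y * x)) fun G _ _ ih x y hxy => ?_
  have hcenter : ⁅x, y⁆ ∈ center G := by
    rw [← QuotientGroup.ker_mk' (center G), MonoidHom.mem_ker, map_commutatorElement,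
      commutatorElement_eq_one_iff_commute]
    exact ih _ _ (hxy.of_dvd (orderOf_map_dvd _ x) (orderOf_map_dvd _ y))
  have hy : ⁅x, y⁆ ^ orderOf y = 1 := by
    rw [← commutatorElement_inv, inv_pow, inv_eq_one]
    exact commutatorElement_pow_orderOf (commutatorElement_inv x y ▸ inv_mem hcenter)
  rw [← commutatorElement_eq_one_iff_commute, ← pow_one ⁅x, y⁆, ← hxy.gcd_eq_one]
  exact pow_gcd_eq_one.2 ⟨commutatorElement_pow_orderOf hcenter, hy⟩

theorem inf_center_ne_bot [Group.IsNilpotent G] {N : Subgroup G} [hN : N.Normal] (hN1 : N ≠ ⊥) :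
    N ⊓ center G ≠ ⊥ := by
  contrapose! hN1
  have hupper (n : ℕ) : N ⊓ Subgroup.upperCentralSeries G n ≤ ⊥ := by
    induction n with
    | zero => exact inf_le_right
    | succ n ih =>
      rintro x ⟨hxN, hx⟩
      have hcomm (y : G) : ⁅x, y⁆ = 1 := by
        have hmem : x * (y * x⁻¹ * y⁻¹) ∈ N := N.mul_mem hxN (hN.conj_mem _ (N.inv_mem hxN) y)
        refine ih ⟨?_, Subgroup.mem_upperCentralSeries_succ_iff.1 hx y⟩
        rwa [commutatorElement_def, mul_assoc, mul_assoc, ← mul_assoc y]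
      rw [← hN1]
      exact ⟨hxN, mem_center_iff.2 fun y =>
        (commutatorElement_eq_one_iff_mul_comm.1 (hcomm y)).symm⟩
  obtain ⟨n, hn⟩ := Group.IsNilpotent.nilpotent G
  simpa only [hn, inf_top_eq, le_bot_iff] using hupper n

theorem inf_centralizer_ne_bot {N H : Subgroup G} [N.Normal] [Group.IsNilpotent H] (hNH : N ≤ H)
    (hN1 : N ≠ ⊥) : N ⊓ centralizer (H : Set G) ≠ ⊥ := by
  have hN1H : N.subgroupOf H ≠ ⊥ := by
    rwa [Ne, subgroupOf_eq_bot, disjoint_iff, inf_eq_left.2 hNH]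
  obtain ⟨⟨x, hxN, hxc⟩, hx1⟩ := ne_bot_iff_exists_ne_one.1 (inf_center_ne_bot hN1H)
  have hx : (x : G) ∈ N ⊓ centralizer (H : Set G) :=
    ⟨hxN, fun h hh => congrArg Subtype.val (mem_center_iff.1 hxc ⟨h, hh⟩)⟩
  intro hbot
  rw [hbot, mem_bot] at hx
  exact hx1 (Subtype.ext (Subtype.ext hx))

theorem isCoatom_of_prime_index {H : Subgroup G} (hH : H.index.Prime) : IsCoatom H := by
  refine ⟨fun h => hH.ne_one (index_eq_one.2 h), fun L hHL => ?_⟩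
  have hmul : H.relIndex L * L.index = H.index := relIndex_mul_index hHL.le
  rcases (Nat.dvd_prime hH).1 (Dvd.intro_left _ hmul) with hL | hL
  · exact index_eq_one.1 hL
  · rw [hL, Nat.mul_eq_right hH.ne_zero] at hmul
    exact absurd (relIndex_eq_one.1 hmul) hHL.not_ge

theorem normal_of_isNilpotent_quotient_normalCore {H : Subgroup G} (hH : H.index.Prime)
    [Group.IsNilpotent (G ⧸ H.normalCore)] : H.Normal := by
  let π := QuotientGroup.mk' H.normalCore
  have hker : π.ker ≤ H := by
    rw [QuotientGroup.ker_mk']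
    exact H.normalCore_le
  have hcoatom : IsCoatom (H.map π) := isCoatom_of_prime_index (by
    rwa [index_map_eq _ (QuotientGroup.mk'_surjective _) hker])
  have hnormal : (H.map π).Normal :=
    NormalizerCondition.normal_of_coatom _ Group.normalizerCondition_of_isNilpotent hcoatom
  simpa only [comap_map_eq_self hker] using hnormal.comap π

end Nilpotent

section CoprimeAction

open Subgroup
open scoped IsMulCommutative commutatorElement

variable {G : Type*} [Group G]

theorem card_quotient_lt [Finite G] {N : Subgroup G} (hN1 : N ≠ ⊥) :
    Nat.card (G ⧸ N) < Nat.card G := by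
  rw [card_eq_card_quotient_mul_card_subgroup N]
  exact lt_mul_of_one_lt_right Nat.card_pos (N.one_lt_card_iff_ne_bot.2 hN1)

theorem exists_eq_mul_inv_of_cocycle {H N : Type*} [Group H] [Finite H] [CommGroup N]
    (φ : H →* MulAut N) (hcop : (Nat.card N).Coprime (Nat.card H)) (f : H → N)
    (hf : ∀ g h, f (g * h) = f g * φ g (f h)) : ∃ n : N, ∀ g, f g = n * (φ g n)⁻¹ := by
  have := Fintype.ofFinite H
  obtain ⟨n, hn⟩ : ∃ n : N, n ^ Nat.card H = ∏ h, f h := (powCoprime hcop).surjective _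
  refine ⟨n, fun g => (powCoprime hcop).injective ?_⟩
  have hprod : n ^ Nat.card H = f g ^ Nat.card H * φ g (n ^ Nat.card H) := by
    calc
      n ^ Nat.card H = ∏ h, f (g * h) :=
        hn.trans (Fintype.prod_equiv (Equiv.mulLeft g) _ _ fun _ => rfl).symm
      _ = f g ^ Nat.card H * φ g (n ^ Nat.card H) := by
        rw [hn, map_prod]
        simp only [hf, Finset.prod_mul_distrib, Finset.prod_const, Finset.card_univ,
          Nat.card_eq_fintype_card]
  change f g ^ Nat.card H = (n * (φ g n)⁻¹) ^ Nat.card H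
  rw [mul_pow, inv_pow, ← map_pow, eq_mul_inv_iff_mul_eq, ← hprod]

theorem exists_conj_mem_of_le_sup_of_isMulCommutative {N A K : Subgroup G} [N.Normal]
    [IsMulCommutative N] [Finite A] (hNA : (Nat.card N).Coprime (Nat.card A))
    (hNK : Disjoint N K) (hA : A ≤ N ⊔ K) : ∃ n ∈ N, ∀ a ∈ A, n⁻¹ * a * n ∈ K := by
  have hproj (a : A) : ∃ z : N, (z : G)⁻¹ * a ∈ K := by
    obtain ⟨z, hz, k, hk, hzk⟩ := mem_sup_of_normal_left.1 (hA a.2)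
    exact ⟨⟨z, hz⟩, by simpa [← hzk] using hk⟩
  choose f hf using hproj
  let φ : A →* MulAut N := MulAut.conjNormal.comp A.subtype
  have hφ (a : A) (z : N) : (φ a z : G) = a * z * (a : G)⁻¹ := rfl
  have hcocycle (a b : A) : f (a * b) = f a * φ a (f b) := by
    have hK : ((f a * φ a (f b))⁻¹ * f (a * b) : G) ∈ K := by
      convert K.mul_mem (K.mul_mem (hf a) (hf b)) (K.inv_mem (hf (a * b))) using 1
      rw [mul_comm (f a)]
      push_cast [hφ]
      group
    have hone : ((f a * φ a (f b))⁻¹ * f (a * b) : G) = 1 :=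
      disjoint_def.1 hNK ((f a * φ a (f b))⁻¹ * f (a * b)).2 hK
    exact (inv_mul_eq_one.1 (Subtype.ext hone)).symm
  obtain ⟨n, hn⟩ := exists_eq_mul_inv_of_cocycle φ hNA f hcocycle
  refine ⟨n, n.2, fun a ha => ?_⟩
  have hna := hf ⟨a, ha⟩
  rw [hn, mul_comm n] at hna
  convert hna using 1
  simp [hφ, mul_assoc]

theorem exists_mul_mem_centralizer [Finite G] {N K : Subgroup G} [hN : N.Normal]
    [IsMulCommutative N] (hNK : (Nat.card N).Coprime (Nat.card K)) {x : G}
    (hx : ∀ k ∈ K, ⁅x, k⁆ ∈ N) : ∃ n ∈ N, n * x ∈ centralizer (K : Set G) := by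
  have hdisj : Disjoint N K := disjoint_of_coprime_natCard hNK
  obtain ⟨n, hn, hconj⟩ : ∃ n ∈ N, ∀ a ∈ MulAut.conj x • K, n⁻¹ * a * n ∈ K := by
    refine exists_conj_mem_of_le_sup_of_isMulCommutative ?_ hdisj ?_
    · rwa [← Nat.card_congr (equivSMul (MulAut.conj x) K).toEquiv]
    · rintro _ ⟨k, hk, rfl⟩
      simpa [commutatorElement_def] using mul_mem_sup (hx k hk) hk
  refine ⟨n⁻¹, inv_mem hn, fun k hk => ?_⟩
  have hmemK : n⁻¹ * (x * k * x⁻¹) * n ∈ K := hconj _ ⟨k, hk, by simp⟩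
  have hmemN : n⁻¹ * (x * k * x⁻¹) * n * k⁻¹ ∈ N := by
    have hmem : n⁻¹ * ⁅x, k⁆ * (k * n * k⁻¹) ∈ N :=
      mul_mem (mul_mem (inv_mem hn) (hx k hk)) (hN.conj_mem _ hn k)
    simpa [commutatorElement_def, mul_assoc] using hmem
  have hfix : n⁻¹ * (x * k * x⁻¹) * n = k :=
    mul_inv_eq_one.1 (disjoint_def.1 hdisj hmemN (mul_mem hmemK (inv_mem hk)))
  calc
    k * (n⁻¹ * x) = n⁻¹ * (x * k * x⁻¹) * n * (n⁻¹ * x) := by rw [hfix]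
    _ = n⁻¹ * x * k := by group

theorem exists_conj_mem_of_le_sup [Finite G] {N A K : Subgroup G} [N.Normal]
    [Group.IsNilpotent N] (hNA : (Nat.card N).Coprime (Nat.card A))
    (hNK : (Nat.card N).Coprime (Nat.card K)) (hA : A ≤ N ⊔ K) :
    ∃ g : G, ∀ a ∈ A, g⁻¹ * a * g ∈ K := by
  induction hcard : Nat.card G using Nat.strong_induction_on generalizing G with
  | _ c ih =>
  rcases eq_or_ne N ⊥ with rfl | hN1
  · exact ⟨1, fun a ha => by simpa using hA ha⟩
  let Z := N ⊓ centralizer (N : Set G)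
  have hZcomm : IsMulCommutative Z := ⟨⟨fun x y => Subtype.ext (y.2.2 x x.2.1)⟩⟩
  have hZN : Nat.card Z ∣ Nat.card N := card_dvd_of_le inf_le_left
  let π := QuotientGroup.mk' Z
  have hnormal : (N.map π).Normal := ‹N.Normal›.map π (QuotientGroup.mk'_surjective Z)
  have hnilpotent : Group.IsNilpotent (N.map π) :=
    Group.nilpotent_of_surjective (π.subgroupMap N) (π.subgroupMap_surjective N)
  have hlt : Nat.card (G ⧸ Z) < c :=
    hcard ▸ card_quotient_lt (inf_centralizer_ne_bot le_rfl hN1)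
  obtain ⟨⟨g⟩, hg⟩ := ih _ hlt (N := N.map π) (A := A.map π) (K := K.map π)
    (hNA.of_dvd (card_map_dvd _ _) (card_map_dvd _ _))
    (hNK.of_dvd (card_map_dvd _ _) (card_map_dvd _ _))
    (by simpa only [Subgroup.map_sup] using map_mono (f := π) hA) rfl
  obtain ⟨n, -, hn⟩ : ∃ n ∈ Z, ∀ a ∈ MulAut.conj g⁻¹ • A, n⁻¹ * a * n ∈ K := by
    refine exists_conj_mem_of_le_sup_of_isMulCommutative ?_
      (disjoint_of_coprime_natCard (hNK.coprime_dvd_left hZN)) ?_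
    · rw [← Nat.card_congr (equivSMul (MulAut.conj g⁻¹) A).toEquiv]
      exact hNA.coprime_dvd_left hZN
    · rintro _ ⟨a, ha, rfl⟩
      have hmem : g⁻¹ * a * g ∈ (K.map π).comap π := hg _ (mem_map_of_mem π ha)
      rw [comap_map_eq, QuotientGroup.ker_mk', sup_comm] at hmem
      simpa using hmem
  refine ⟨g * n, fun a ha => ?_⟩
  simpa [mul_assoc] using hn _ ⟨a, ha, rfl⟩

end CoprimeAction

section NormMap

variable {G N : Type*} [Group G] [CommGroup N] (φ : G →* MulAut N) (A : Subgroup G)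

/-- The subgroup `C_N(A)` of the elements of `N` fixed by every element of `A`, where `G` acts
on `N` through `φ`. -/
def fixedSubgroup : Subgroup N where
  carrier := {x | ∀ a ∈ A, φ a x = x}
  one_mem' a _ := map_one (φ a)
  mul_mem' hx hy a ha := by rw [map_mul, hx a ha, hy a ha]
  inv_mem' hx a ha := by rw [map_inv, hx a ha]

/-- The norm map `x ↦ ∏ a ∈ A, φ a x` of the action of `A` on the abelian group `N`. Its kernel
describes `C_N(B)` without mentioning `B`, see `fixedSubgroup_eq_ker_actionNorm`. -/
def actionNorm [Fintype A] : N →* N :=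
  ∏ a : A, (φ a).toMonoidHom

variable {φ A}

theorem actionNorm_apply [Fintype A] (x : N) : actionNorm φ A x = ∏ a : A, φ a x :=
  MonoidHom.finsetProd_apply _ _ _

theorem actionNorm_map_apply [Fintype A] {a : G} (ha : a ∈ A) (x : N) :
    actionNorm φ A (φ a x) = actionNorm φ A x := by
  rw [actionNorm_apply, actionNorm_apply]
  exact Fintype.prod_equiv (Equiv.mulRight (⟨a, ha⟩ : A)) _ _ fun b => by simp

theorem actionNorm_mem_fixedSubgroup [Fintype A] (x : N) :
    actionNorm φ A x ∈ fixedSubgroup φ A := by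
  intro a ha
  rw [actionNorm_apply, map_prod]
  exact Fintype.prod_equiv (Equiv.mulLeft (⟨a, ha⟩ : A)) _ _ fun b => by simp

theorem actionNorm_eq_pow_of_mem_fixedSubgroup [Fintype A] {x : N} (hx : x ∈ fixedSubgroup φ A) :
    actionNorm φ A x = x ^ Nat.card A := by
  rw [actionNorm_apply, Nat.card_eq_fintype_card, ← Finset.card_univ, ← Finset.prod_const]
  exact Finset.prod_congr rfl fun a _ => hx a a.2

variable {B K : Subgroup G} [Fintype A]

theorem actionNorm_actionNorm_eq_pow [Fintype K] (hAB : (A : Set G) * B = K) {x : N}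
    (hx : x ∈ fixedSubgroup φ B) :
    actionNorm φ A (actionNorm φ K x) = actionNorm φ A x ^ Nat.card K := by
  rw [actionNorm_apply (A := K), map_prod, Nat.card_eq_fintype_card, ← Finset.card_univ,
    ← Finset.prod_const]
  refine Finset.prod_congr rfl fun k _ => ?_
  obtain ⟨a, ha, b, hb, hab⟩ := hAB.ge k.2
  rw [← hab, map_mul, MulAut.mul_apply, hx b hb, actionNorm_map_apply ha]

theorem fixedSubgroup_eq_ker_actionNorm [Finite K] (hcop : (Nat.card N).Coprime (Nat.card K))
    (hAB : (A : Set G) * B = K) (hsup : fixedSubgroup φ A ⊔ fixedSubgroup φ B = ⊤)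
    (hK : fixedSubgroup φ K = ⊥) : fixedSubgroup φ B = (actionNorm φ A).ker := by
  have := Fintype.ofFinite K
  have hAK : A ≤ K := fun a ha => hAB.le ⟨a, ha, 1, B.one_mem, mul_one a⟩
  have hcopA : (Nat.card N).Coprime (Nat.card A) :=
    hcop.coprime_dvd_right (Subgroup.card_dvd_of_le hAK)
  have hle : fixedSubgroup φ B ≤ (actionNorm φ A).ker := by
    intro x hx
    have hone : actionNorm φ K x = 1 := by
      rw [← Subgroup.mem_bot, ← hK]
      exact actionNorm_mem_fixedSubgroup x
    have hpow := actionNorm_actionNorm_eq_pow hAB hx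
    rw [hone, map_one] at hpow
    exact (pow_eq_one_iff_of_coprime hcop).1 ⟨pow_card_eq_one', hpow.symm⟩
  refine hle.antisymm fun x hx => ?_
  obtain ⟨u, hu, v, hv, rfl⟩ := Subgroup.mem_sup.1 (hsup.ge (Subgroup.mem_top x))
  rw [MonoidHom.mem_ker, map_mul, hle hv, mul_one, actionNorm_eq_pow_of_mem_fixedSubgroup hu] at hx
  rwa [(pow_eq_one_iff_of_coprime hcopA).1 ⟨pow_card_eq_one', hx⟩, one_mul]

end NormMap

section MinimalNormal

open Subgroup

variable {G : Type*} [Group G]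

/-- `N` is a minimal normal subgroup of `G`, that is, minimal among the nontrivial normal
subgroups. -/
def IsMinimalNormal (N : Subgroup G) : Prop :=
  Minimal (fun M : Subgroup G => M.Normal ∧ M ≠ ⊥) N

theorem exists_isMinimalNormal_le [Finite G] {P : Subgroup G} [hP : P.Normal] (hP1 : P ≠ ⊥) :
    ∃ N ≤ P, IsMinimalNormal N :=
  exists_minimal_le_of_wellFoundedLT _ P ⟨hP, hP1⟩

namespace IsMinimalNormal

variable {N : Subgroup G}

theorem normal (hN : IsMinimalNormal N) : N.Normal := hN.prop.1

theorem ne_bot (hN : IsMinimalNormal N) : N ≠ ⊥ := hN.prop.2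

theorem le_of_inf_ne_bot (hN : IsMinimalNormal N) {M : Subgroup G} (hNM : (N ⊓ M).Normal)
    (hne : N ⊓ M ≠ ⊥) : N ≤ M :=
  inf_eq_left.1 (hN.eq_of_le ⟨hNM, hne⟩ inf_le_left)

theorem le_centralizer_of_le (hN : IsMinimalNormal N) {P : Subgroup G} [P.Normal]
    [Group.IsNilpotent P] (hNP : N ≤ P) : N ≤ centralizer (P : Set G) :=
  have := hN.normal
  hN.le_of_inf_ne_bot inferInstance (inf_centralizer_ne_bot hNP hN.ne_bot)

theorem prime_card_of_le_center [Finite G] (hN : IsMinimalNormal N) (hcenter : N ≤ center G) :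
    (Nat.card N).Prime := by
  obtain ⟨r, hr, hrN⟩ := Nat.exists_prime_and_dvd (mt card_eq_one.1 hN.ne_bot)
  have : Fact r.Prime := ⟨hr⟩
  obtain ⟨x, hx⟩ := exists_prime_orderOf_dvd_card' (G := N) r hrN
  have hle : zpowers (x : G) ≤ N := zpowers_le.2 x.2
  have hnormal : (zpowers (x : G)).Normal := ⟨fun y hy g => by
    rwa [mem_center_iff.1 (hcenter (hle hy)) g, mul_inv_cancel_right]⟩
  have hne : zpowers (x : G) ≠ ⊥ := by
    rw [Ne, zpowers_eq_bot, ← orderOf_eq_one_iff, orderOf_coe, hx]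
    exact hr.ne_one
  rwa [← hN.eq_of_le ⟨hnormal, hne⟩ hle, Nat.card_zpowers, orderOf_coe, hx]

end IsMinimalNormal

end MinimalNormal

section CentralizerFactors

open Subgroup
open scoped IsMulCommutative commutatorElement

variable {G : Type*} [Group G] {N A B K : Subgroup G}

theorem inf_centralizer_le_center (hK : centralizer (N : Set G) ⊔ K = ⊤) :
    N ⊓ centralizer (K : Set G) ≤ center G := by
  rw [← centralizer_univ, ← coe_top, ← hK, le_centralizer_iff]
  exact sup_le (centralizer_le inf_le_left) (le_centralizer_iff.1 inf_le_right)

theorem fixedSubgroup_conjNormal [N.Normal] [IsMulCommutative N] :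
    fixedSubgroup (N := N) MulAut.conjNormal A = (centralizer (A : Set G)).subgroupOf N := by
  ext x
  refine forall₂_congr fun a _ => ?_
  rw [Subtype.ext_iff, MulAut.conjNormal_apply, mul_inv_eq_iff_eq_mul]
  rfl

variable [Finite G]

theorem le_inf_centralizer_sup_inf_centralizer [hN : N.Normal] [IsMulCommutative N]
    (hAB : (A : Set G) * B = K) (hcop : (Nat.card N).Coprime (Nat.card K))
    (hfac : (N : Set G) ⊆ centralizer (A : Set G) * centralizer (B : Set G)) :
    N ≤ N ⊓ centralizer (A : Set G) ⊔ N ⊓ centralizer (B : Set G) := by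
  have hAK : (A : Set G) ⊆ K := hAB ▸ Set.subset_mul_left _ B.one_mem
  have hBK : (B : Set G) ⊆ K := hAB ▸ Set.subset_mul_right _ A.one_mem
  intro z hz
  obtain ⟨a, ha, b, hb, rfl⟩ := hfac hz
  let π := QuotientGroup.mk' N
  have hab : π a * π b = 1 := by rwa [← map_mul, ← MonoidHom.mem_ker, QuotientGroup.ker_mk']
  have hcomm : ∀ k ∈ K, ⁅a, k⁆ ∈ N := by
    intro k hk
    obtain ⟨u, hu, v, hv, rfl⟩ := hAB.ge hk
    have hau : Commute (π a) (π u) := Commute.map (ha u hu).symm π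
    have hav : Commute (π a) (π v) := by
      rw [eq_inv_of_mul_eq_one_left hab]
      exact (Commute.map (hb v hv).symm π).inv_left
    rw [← QuotientGroup.ker_mk' N, MonoidHom.mem_ker, map_commutatorElement,
      commutatorElement_eq_one_iff_commute, map_mul]
    exact hau.mul_right hav
  obtain ⟨n, hn, hna⟩ := exists_mul_mem_centralizer hcop hcomm
  have hnA : n ∈ centralizer (A : Set G) := by
    simpa using mul_mem (centralizer_le hAK hna) (inv_mem ha)
  have hnzB : n * (a * b) ∈ centralizer (B : Set G) := by
    simpa only [mul_assoc] using mul_mem (centralizer_le hBK hna) hb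
  have hinv : n⁻¹ ∈ N ⊓ centralizer (A : Set G) := inv_mem ⟨hn, hnA⟩
  have hmul : n * (a * b) ∈ N ⊓ centralizer (B : Set G) := ⟨mul_mem hn hz, hnzB⟩
  simpa only [inv_mul_cancel_left] using mul_mem_sup hinv hmul

theorem normal_inf_centralizer [hN : N.Normal] [IsMulCommutative N]
    (hAB : (A : Set G) * B = K) (hcop : (Nat.card N).Coprime (Nat.card K))
    (hfac : (N : Set G) ⊆ centralizer (A : Set G) * centralizer (B : Set G))
    (hK : centralizer (N : Set G) ⊔ K = ⊤) (hcenter : N ⊓ center G = ⊥) :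
    (N ⊓ centralizer (B : Set G)).Normal := by
  have := Fintype.ofFinite A
  have hsup : fixedSubgroup (N := N) MulAut.conjNormal A ⊔
      fixedSubgroup (N := N) MulAut.conjNormal B = ⊤ := by
    rw [fixedSubgroup_conjNormal, fixedSubgroup_conjNormal, ← inf_subgroupOf_left,
      ← inf_subgroupOf_left (centralizer (B : Set G)), ← subgroupOf_sup inf_le_left inf_le_left,
      subgroupOf_eq_top]
    exact le_inf_centralizer_sup_inf_centralizer hAB hcop hfac
  have hfixK : fixedSubgroup (N := N) MulAut.conjNormal K = ⊥ := by
    rw [fixedSubgroup_conjNormal, subgroupOf_eq_bot, disjoint_comm, disjoint_iff, ← le_bot_iff,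
      ← hcenter]
    exact le_inf inf_le_left (inf_centralizer_le_center hK)
  have hker := fixedSubgroup_eq_ker_actionNorm hcop hAB hsup hfixK
  rw [fixedSubgroup_conjNormal] at hker
  have hmemA : A ≤ normalizer (N ⊓ centralizer (B : Set G) : Subgroup G) := by
    rw [le_normalizer_iff]
    rintro a ha x ⟨hxN, hxB⟩
    have hx : (⟨x, hxN⟩ : N) ∈ (actionNorm MulAut.conjNormal A).ker := hker ▸ hxB
    have hax : MulAut.conjNormal a (⟨x, hxN⟩ : N) ∈ (centralizer (B : Set G)).subgroupOf N := by
      rwa [hker, MonoidHom.mem_ker, actionNorm_map_apply ha]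
    exact ⟨hN.conj_mem x hxN a, hax⟩
  have hcentral {L : Subgroup G}
      (hL : L ≤ centralizer (N ⊓ centralizer (B : Set G) : Subgroup G)) :
      L ≤ normalizer (N ⊓ centralizer (B : Set G) : Subgroup G) :=
    hL.trans (centralizer_le_normalizer _)
  have hmemK : K ≤ A ⊔ B := fun g hg => by
    obtain ⟨a, ha, b, hb, rfl⟩ := hAB.ge hg
    exact mul_mem_sup ha hb
  rw [← normalizer_eq_top_iff, ← top_le_iff, ← hK]
  exact sup_le (hcentral (centralizer_le inf_le_left)) (hmemK.trans
    (sup_le hmemA (hcentral (le_centralizer_iff.1 inf_le_right))))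

theorem IsMinimalNormal.le_centralizer_or_le_centralizer [IsMulCommutative N]
    (hN : IsMinimalNormal N) (hAB : (A : Set G) * B = K)
    (hcop : (Nat.card N).Coprime (Nat.card K))
    (hfac : (N : Set G) ⊆ centralizer (A : Set G) * centralizer (B : Set G))
    (hK : centralizer (N : Set G) ⊔ K = ⊤) :
    N ≤ centralizer (A : Set G) ∨ N ≤ centralizer (B : Set G) := by
  have := hN.normal
  by_cases hcenter : N ⊓ center G = ⊥
  · have hnormal := normal_inf_centralizer hAB hcop hfac hK hcenter
    by_cases hB : N ⊓ centralizer (B : Set G) = ⊥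
    · left
      simpa [hB] using le_inf_centralizer_sup_inf_centralizer hAB hcop hfac
    · exact Or.inr (hN.le_of_inf_ne_bot hnormal hB)
  · exact Or.inl ((hN.le_of_inf_ne_bot inferInstance hcenter).trans (center_le_centralizer _))

end CentralizerFactors

section PCore

open Subgroup

variable {G : Type*} [Group G] {p : ℕ} {H L Q : Subgroup G}

/-- The largest normal `p`-subgroup `O_p(H)` of `H`, realised as a subgroup of `G`. It is encoded
as the intersection of the Sylow `p`-subgroups of `H`. -/
def pCore (p : ℕ) (H : Subgroup G) : Subgroup G :=
  (⨅ P : Sylow p H, (P : Subgroup H)).map H.subtype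

theorem pCore_le : pCore p H ≤ H :=
  map_subtype_le _

theorem isPGroup_pCore : IsPGroup p (pCore p H) :=
  ((default : Sylow p H).isPGroup'.to_le (iInf_le _ _)).map H.subtype

theorem le_pCore (hQH : Q ≤ H) (hQ : IsPGroup p Q) (hHQ : H ≤ normalizer (Q : Set G)) :
    Q ≤ pCore p H := by
  have := (normal_subgroupOf_iff_le_normalizer hQH).2 hHQ
  rw [← map_subgroupOf_eq_of_le hQH]
  have hQ' : IsPGroup p (Q.subgroupOf H) := hQ.comap_of_injective _ H.subtype_injective
  exact map_mono (le_iInf hQ'.le_sylow_of_normal)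

theorem normalizer_le_normalizer_pCore :
    normalizer (H : Set G) ≤ normalizer (pCore p H : Set G) := by
  rw [le_normalizer_iff]
  rintro g hg _ ⟨x, hx, rfl⟩
  let φ : MulAut H := H.normalizerMonoidHom ⟨g, hg⟩
  refine ⟨φ x, mem_iInf.2 fun P => ?_, rfl⟩
  exact mem_inv_pointwise_smul_iff.1 (mem_iInf.1 hx (φ⁻¹ • P))

theorem pCore_le_pCore (hHL : H ≤ L) (hLH : L ≤ normalizer (H : Set G)) :
    pCore p H ≤ pCore p L :=
  le_pCore (pCore_le.trans hHL) isPGroup_pCore (hLH.trans normalizer_le_normalizer_pCore)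

theorem normal_pCore_top : (pCore p (⊤ : Subgroup G)).Normal := by
  rw [← normalizer_eq_top_iff, ← top_le_iff]
  exact le_normalizer.trans normalizer_le_normalizer_pCore

theorem pCore_eq_map_sylow (P : Sylow p H) [(P : Subgroup H).Normal] :
    pCore p H = (P : Subgroup H).map H.subtype :=
  congrArg (map H.subtype)
    (le_antisymm (iInf_le _ P) (le_iInf P.isPGroup'.le_sylow_of_normal))

theorem exists_pCore_mul_eq [Finite H] [hp : Fact p.Prime] [Group.IsNilpotent H] :
    ∃ K : Subgroup G, p.Coprime (Nat.card K) ∧ (pCore p H * K : Set G) = H ∧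
      K ≤ centralizer (pCore p H : Set G) := by
  let P : Sylow p H := default
  obtain ⟨T, hT⟩ := exists_right_complement'_of_coprime P.card_coprime_index
  have hTp : p.Coprime (Nat.card T) := by
    rw [← hT.symm.index_eq_card]
    exact (Nat.Prime.coprime_iff_not_dvd hp.out).2 P.not_dvd_index
  rw [pCore_eq_map_sylow P]
  refine ⟨T.map H.subtype, hTp.coprime_dvd_right (card_map_dvd _ _), ?_, ?_⟩
  · rw [coe_map, coe_map, ← Set.image_mul, hT.mul_eq, Set.image_univ, coe_subtype,
      Subtype.range_coe]
  · rintro _ ⟨y, hy, rfl⟩ _ ⟨x, hx, rfl⟩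
    obtain ⟨i, hi⟩ := IsPGroup.iff_orderOf.1 P.isPGroup' ⟨x, hx⟩
    have hxy : (orderOf x).Coprime (orderOf y) := by
      rw [← orderOf_mk x hx, hi]
      exact (hTp.pow_left i).coprime_dvd_right (T.orderOf_dvd_natCard hy)
    exact congrArg Subtype.val (commute_of_coprime_orderOf hxy).eq

end PCore

section ModularEmbedding

open Subgroup

variable {G G' : Type*} [Group G] [Group G'] {n : ℕ}

theorem normalCore_comap {f : G →* G'} (hf : Function.Surjective f) (H : Subgroup G') :
    (H.comap f).normalCore = H.normalCore.comap f := by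
  ext x
  refine Iff.trans ?_ hf.forall.symm
  simp [normalCore]

theorem card_quotient_normalCore (H : Subgroup G) :
    Nat.card (G ⧸ H.normalCore) = H.normalCore.relIndex H * H.index := by
  rw [← index_eq_card, relIndex_mul_index H.normalCore_le]

theorem card_quotient_normalCore_dvd_factorial (H : Subgroup G) [Finite (G ⧸ H)] :
    Nat.card (G ⧸ H.normalCore) ∣ H.index.factorial := by
  rw [← index_eq_card, normalCore_eq_ker, index_ker, index_eq_card, ← Nat.card_perm]
  exact card_subgroup_dvd_card _

/-- The subgroup `H` of `G` is `n`-modularly embedded in `G`: the absolute form of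
`ModularlyEmbedded n H ⊤`, which avoids passing through the group `↥⊤`. -/
def IsModularlyEmbedded (n : ℕ) (H : Subgroup G) : Prop :=
  H.Normal ∨ ∃ p q : ℕ, p.Prime ∧ q.Prime ∧ ¬ Group.IsNilpotent (G ⧸ H.normalCore) ∧
    Nat.card (G ⧸ H.normalCore) = p * q ^ n ∧ H.index = p

theorem modularlyEmbedded_iff {H L : Subgroup G} :
    ModularlyEmbedded n H L ↔ H ≤ L ∧ IsModularlyEmbedded n (H.subgroupOf L) :=
  Iff.rfl

theorem isModularlyEmbedded_comap_iff {f : G →* G'} (hf : Function.Surjective f)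
    {H : Subgroup G'} : IsModularlyEmbedded n (H.comap f) ↔ IsModularlyEmbedded n H := by
  let π := (QuotientGroup.mk' H.normalCore).comp f
  have hπ : (H.comap f).normalCore = π.ker := by
    rw [normalCore_comap hf, ← MonoidHom.comap_ker, QuotientGroup.ker_mk']
  let e : G ⧸ (H.comap f).normalCore ≃* G' ⧸ H.normalCore :=
    QuotientGroup.liftEquiv _ ((QuotientGroup.mk'_surjective _).comp hf) hπ
  have hnormal : (H.comap f).Normal ↔ H.Normal :=
    ⟨fun h => map_comap_eq_self_of_surjective hf H ▸ h.map f hf, fun h => h.comap f⟩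
  have hnilpotent : Group.IsNilpotent (G ⧸ (H.comap f).normalCore) ↔
      Group.IsNilpotent (G' ⧸ H.normalCore) :=
    ⟨fun _ => Group.nilpotent_of_mulEquiv e, fun _ => Group.nilpotent_of_mulEquiv e.symm⟩
  rw [IsModularlyEmbedded, IsModularlyEmbedded, hnormal, hnilpotent, Nat.card_congr e.toEquiv,
    index_comap_of_surjective _ hf]

theorem IsModularlyEmbedded.map {f : G →* G'} (hf : Function.Surjective f) {H : Subgroup G}
    (hH : IsModularlyEmbedded n H) : IsModularlyEmbedded n (H.map f) := by
  by_cases hker : f.ker ≤ H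
  · rwa [← isModularlyEmbedded_comap_iff hf, comap_map_eq_self hker]
  left
  rcases hH with hH | ⟨p, q, hp, -, -, -, rfl⟩
  · exact hH.map f hf
  · have htop : H ⊔ f.ker = ⊤ :=
      (isCoatom_of_prime_index hp).2 _ (left_lt_sup.2 hker)
    have hmap : H.map f = (⊤ : Subgroup G).map f := map_eq_map_iff.2 (by rw [htop, top_sup_eq])
    rw [hmap, map_top_of_surjective f hf]
    infer_instance

theorem ModularlyEmbedded.comap {f : G →* G'} (hf : Function.Surjective f) {H L : Subgroup G'}
    (h : ModularlyEmbedded n H L) : ModularlyEmbedded n (H.comap f) (L.comap f) :=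
  ⟨comap_mono h.1, (isModularlyEmbedded_comap_iff
    (f.subgroupComap_surjective_of_surjective L hf) (H := H.subgroupOf L)).2 h.2⟩

theorem ModularlyEmbedded.map (f : G →* G') {H L : Subgroup G} (h : ModularlyEmbedded n H L) :
    ModularlyEmbedded n (H.map f) (L.map f) := by
  have hmap : (H.map f).subgroupOf (L.map f) = (H.subgroupOf L).map (f.subgroupMap L) := by
    have hcomp : (L.map f).subtype.comp (f.subgroupMap L) = f.comp L.subtype := rfl
    refine map_injective (L.map f).subtype_injective ?_
    rw [map_subgroupOf_eq_of_le (map_mono h.1), map_map, hcomp, ← map_map,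
      map_subgroupOf_eq_of_le h.1]
  rw [modularlyEmbedded_iff, hmap]
  exact ⟨map_mono h.1, IsModularlyEmbedded.map (f.subgroupMap_surjective L) h.2⟩

/-- One step of a chain exhibiting `k`-submodularity, so that `KSubmodularIn k` is the
reflexive transitive closure of `ModularStep k`. -/
def ModularStep (k : ℕ) (H L : Subgroup G) : Prop :=
  ∃ n, 0 < n ∧ n ≤ k ∧ ModularlyEmbedded n H L

theorem kSubmodularIn_iff_reflTransGen {k : ℕ} {H L : Subgroup G} :
    KSubmodularIn k H L ↔ Relation.ReflTransGen (ModularStep k) H L := by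
  constructor
  · rintro ⟨m, c, rfl, rfl, hc⟩
    exact (reflTransGen_of_succ_of_le (fun i j => ModularStep k (c i) (c j))
      (fun i hi => hc i hi.2) m.zero_le).lift c fun _ _ h => h
  · intro h
    induction h using Relation.ReflTransGen.head_induction_on with
    | refl => exact ⟨0, fun _ => L, rfl, rfl, fun i hi => absurd hi i.not_lt_zero⟩
    | @head H _ hstep _ ih =>
      obtain ⟨m, c, rfl, hm, hc⟩ := ih
      refine ⟨m + 1, fun i => i.casesOn H c, rfl, hm, fun i hi => ?_⟩
      cases i with
      | zero => exact hstep
      | succ i => exact hc i (Nat.lt_of_succ_lt_succ hi)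

theorem KSubmodularIn.map {k : ℕ} (f : G →* G') {H L : Subgroup G} (h : KSubmodularIn k H L) :
    KSubmodularIn k (H.map f) (L.map f) := by
  rw [kSubmodularIn_iff_reflTransGen] at h ⊢
  exact h.lift _ fun _ _ ⟨n, hn, hnk, hstep⟩ => ⟨n, hn, hnk, hstep.map f⟩

theorem KSubmodularIn.comap {k : ℕ} {f : G →* G'} (hf : Function.Surjective f)
    {H L : Subgroup G'} (h : KSubmodularIn k H L) :
    KSubmodularIn k (H.comap f) (L.comap f) := by
  rw [kSubmodularIn_iff_reflTransGen] at h ⊢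
  exact h.lift _ fun _ _ ⟨n, hn, hnk, hstep⟩ => ⟨n, hn, hnk, hstep.comap hf⟩

end ModularEmbedding

section PCoreOfModularlyEmbedded

open Subgroup

variable {G : Type*} [Group G] [Finite G] {n k p q : ℕ} {H L : Subgroup G}

theorem prime_lt_index_of_not_isNilpotent (hn : 0 < n) (hq : q.Prime)
    (hnil : ¬ Group.IsNilpotent (G ⧸ H.normalCore))
    (hcard : Nat.card (G ⧸ H.normalCore) = H.index * q ^ n) : q < H.index := by
  have hdvd : q ∣ Nat.card (G ⧸ H.normalCore) :=
    hcard ▸ (dvd_pow_self q hn.ne').mul_left H.index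
  have hle : q ≤ H.index :=
    hq.dvd_factorial.1 (hdvd.trans (card_quotient_normalCore_dvd_factorial H))
  refine hle.lt_of_ne fun hqi => hnil ?_
  have : Fact q.Prime := ⟨hq⟩
  exact (IsPGroup.of_card (n := n + 1) (by rw [hcard, ← hqi, pow_succ'])).isNilpotent

theorem le_of_isPGroup_of_coprime_relIndex [Fact p.Prime] {N Q : Subgroup G} [N.Normal]
    (hQ : IsPGroup p Q) (hQH : Q ≤ H) (hp : p.Coprime (N.relIndex H)) : Q ≤ N := by
  obtain ⟨i, hi⟩ := IsPGroup.iff_card.1 hQ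
  have hQN : N.relIndex Q ∣ p ^ i := hi ▸ relIndex_dvd_card N Q
  have hHN : N.relIndex Q ∣ N.relIndex H := by
    have := card_dvd_of_le (map_mono (f := QuotientGroup.mk' N) hQH)
    rwa [← relIndex_ker, ← relIndex_ker, QuotientGroup.ker_mk'] at this
  exact relIndex_eq_one.1 (Nat.eq_one_of_dvd_coprimes (hp.pow_left i) hQN hHN)

theorem ModularlyEmbedded.pCore_le_pCore [hp : Fact p.Prime]
    (hmax : ∀ q, q.Prime → q ∣ Nat.card G → q ≤ p) (hn : 0 < n) (h : ModularlyEmbedded n H L) :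
    pCore p H ≤ pCore p L := by
  obtain ⟨hHL, hnormal | ⟨r, q, hr, hq, hnil, hcard, rfl⟩⟩ := h
  · exact _root_.pCore_le_pCore hHL ((normal_subgroupOf_iff_le_normalizer hHL).1 hnormal)
  let C := (H.subgroupOf L).normalCore.map L.subtype
  have hCL : C ≤ L := map_subtype_le _
  have hCH : C ≤ H := by
    rw [← map_subgroupOf_eq_of_le hHL]
    exact map_mono (normalCore_le _)
  have hLC : L ≤ normalizer (C : Set G) := by
    rw [← normal_subgroupOf_iff_le_normalizer hCL, subgroupOf,
      comap_map_eq_self_of_injective L.subtype_injective]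
    exact normalCore_normal _
  have hqp : p ≠ q := by
    have hlt := prime_lt_index_of_not_isNilpotent hn hq hnil hcard
    have hle := hmax _ hr ((index_dvd_card _).trans (card_subgroup_dvd_card L))
    exact (hlt.trans_le hle).ne'
  have hrel : (H.subgroupOf L).normalCore.relIndex (H.subgroupOf L) = q ^ n := by
    rw [card_quotient_normalCore, mul_comm] at hcard
    exact Nat.eq_of_mul_eq_mul_left hr.pos hcard
  have hpC : pCore p H ≤ C := by
    rw [← map_subgroupOf_eq_of_le (pCore_le.trans hHL)]
    refine map_mono (le_of_isPGroup_of_coprime_relIndex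
      (isPGroup_pCore.comap_of_injective _ L.subtype_injective) (comap_mono pCore_le) ?_)
    exact hrel ▸ Nat.Coprime.pow_right n ((Nat.coprime_primes hp.out hq).2 hqp)
  calc
    pCore p H ≤ pCore p C :=
      le_pCore hpC isPGroup_pCore (hCH.trans (le_normalizer.trans normalizer_le_normalizer_pCore))
    _ ≤ pCore p L := _root_.pCore_le_pCore hCL hLC

theorem KSubmodularIn.pCore_le_pCore [Fact p.Prime]
    (hmax : ∀ q, q.Prime → q ∣ Nat.card G → q ≤ p) (h : KSubmodularIn k H L) :
    pCore p H ≤ pCore p L := by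
  rw [kSubmodularIn_iff_reflTransGen] at h
  induction h with
  | refl => exact le_rfl
  | tail _ hstep ih =>
    obtain ⟨n, hn, -, hemb⟩ := hstep
    exact ih.trans (hemb.pCore_le_pCore hmax hn)

end PCoreOfModularlyEmbedded

section Complements

open Subgroup

variable {G : Type*} [Group G] {N H : Subgroup G} [N.Normal]

theorem isComplement'_subgroupOf_sup (hNH : Disjoint N H) :
    IsComplement' (N.subgroupOf (N ⊔ H)) (H.subgroupOf (N ⊔ H)) := by
  refine isComplement'_of_disjoint_and_mul_eq_univ ?_ ?_
  · rw [disjoint_iff, subgroupOf, subgroupOf, ← comap_inf, hNH.eq_bot]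
    exact bot_subgroupOf _
  · rw [← normal_mul, ← subgroupOf_sup le_sup_left le_sup_right, subgroupOf_self, coe_top]

theorem relIndex_sup_of_disjoint (hNH : Disjoint N H) : H.relIndex (N ⊔ H) = Nat.card N := by
  rw [relIndex, (isComplement'_subgroupOf_sup hNH).index_eq_card,
    Nat.card_congr (subgroupOfEquivOfLe le_sup_left).toEquiv]

theorem le_normalizer_inf : H ≤ normalizer (N ⊓ H : Subgroup G) :=
  (normal_subgroupOf_iff_le_normalizer inf_le_right).1 (by
    rw [inf_subgroupOf_right]
    infer_instance)

theorem normalCore_subgroupOf_sup (hNH : Disjoint N H) :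
    (H.subgroupOf (N ⊔ H)).normalCore = (centralizer (N : Set G) ⊓ H).subgroupOf (N ⊔ H) := by
  apply le_antisymm
  · refine fun x hx => ⟨fun n hn => ?_, normalCore_le (H.subgroupOf _) hx⟩
    have hdisj : Disjoint (N.subgroupOf (N ⊔ H)) (H.subgroupOf (N ⊔ H)).normalCore :=
      (isComplement'_subgroupOf_sup hNH).disjoint.mono_right (normalCore_le _)
    exact congrArg Subtype.val (commute_of_normal_of_disjoint _ _ inferInstance inferInstance hdisj
      ⟨n, mem_sup_left hn⟩ x hn hx)
  · have hle : centralizer (N : Set G) ⊓ H ≤ N ⊔ H := inf_le_right.trans le_sup_right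
    have hN : N ≤ normalizer (centralizer (N : Set G) ⊓ H : Subgroup G) :=
      (le_centralizer_iff.1 inf_le_left).trans (centralizer_le_normalizer _)
    have : ((centralizer (N : Set G) ⊓ H).subgroupOf (N ⊔ H)).Normal :=
      (normal_subgroupOf_iff_le_normalizer hle).2 (sup_le hN le_normalizer_inf)
    exact normal_le_normalCore.2 (comap_mono inf_le_right)

theorem relIndex_normalCore_subgroupOf_sup (hNH : Disjoint N H) :
    (H.subgroupOf (N ⊔ H)).normalCore.relIndex (H.subgroupOf (N ⊔ H)) =
      (centralizer (N : Set G)).relIndex H := by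
  rw [normalCore_subgroupOf_sup hNH, relIndex_subgroupOf le_sup_right, inf_relIndex_right]

theorem normal_subgroupOf_sup_iff (hNH : Disjoint N H) :
    (H.subgroupOf (N ⊔ H)).Normal ↔ H ≤ centralizer (N : Set G) := by
  rw [← relIndex_eq_one, ← relIndex_normalCore_subgroupOf_sup hNH, relIndex_eq_one]
  refine ⟨fun _ => (normalCore_eq_self _).ge, fun hle => ?_⟩
  rw [le_antisymm hle (normalCore_le _)]
  infer_instance

theorem normal_inf_of_centralizer_sup_eq_top (hCH : centralizer (N : Set G) ⊔ H = ⊤) :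
    (N ⊓ H).Normal := by
  have hC : centralizer (N : Set G) ≤ normalizer (N ⊓ H : Subgroup G) :=
    (centralizer_le inf_le_left).trans (centralizer_le_normalizer _)
  exact normalizer_eq_top_iff.1 (top_le_iff.1 (hCH ▸ sup_le hC le_normalizer_inf))

end Complements

section ModularFactor

open Subgroup

variable {G : Type*} [Group G] {k : ℕ} {N H L B : Subgroup G}

/-- `N` has prime order and `G` induces on it an automorphism group of order `q ^ m` with `q` prime
and `m ≤ k`, the induced automorphism group being represented by `G ⧸ C_G(N)`. If `N` is normal,
then every subgroup `H` is embedded in `N ⊔ H` by a single modular step. -/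
structure IsModularFactor (k : ℕ) (N : Subgroup G) : Prop where
  card_prime : (Nat.card N).Prime
  index_centralizer :
    ∃ q m : ℕ, q.Prime ∧ m ≤ k ∧ (centralizer (N : Set G)).index = q ^ m

theorem disjoint_of_prime_card (hN : (Nat.card N).Prime) (hNH : ¬ N ≤ H) : Disjoint N H := by
  have : Fact (Nat.card N).Prime := ⟨hN⟩
  have hbot := (eq_bot_or_eq_top_of_prime_card (H.subgroupOf N)).resolve_right
    (mt subgroupOf_eq_top.1 hNH)
  exact (subgroupOf_eq_bot.1 hbot).symm

theorem IsModularFactor.modularStep_sup [N.Normal] (hk : 0 < k)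
    (hN : IsModularFactor k N) : ModularStep k H (N ⊔ H) := by
  by_cases hnormal : (H.subgroupOf (N ⊔ H)).Normal
  · exact ⟨1, one_pos, hk, le_sup_right, .inl hnormal⟩
  have hNH : Disjoint N H := disjoint_of_prime_card hN.card_prime fun hle => hnormal (by
    rw [sup_eq_right.2 hle, subgroupOf_self]
    infer_instance)
  have hindex : (H.subgroupOf (N ⊔ H)).index = Nat.card N := relIndex_sup_of_disjoint hNH
  obtain ⟨q, m, hq, hmk, hC⟩ := hN.index_centralizer
  obtain ⟨j, hjm, hj⟩ : ∃ j ≤ m, (centralizer (N : Set G)).relIndex H = q ^ j :=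
    (Nat.dvd_prime_pow hq).1 (hC ▸ relIndex_dvd_index_of_normal _ H)
  have hj0 : j ≠ 0 := by
    rintro rfl
    exact hnormal ((normal_subgroupOf_sup_iff hNH).2 (relIndex_eq_one.1 hj))
  refine ⟨j, hj0.bot_lt, hjm.trans hmk, le_sup_right,
    .inr ⟨_, q, hN.card_prime, hq, fun _ => hnormal ?_, ?_, hindex⟩⟩
  · exact normal_of_isNilpotent_quotient_normalCore (hindex ▸ hN.card_prime)
  · rw [card_quotient_normalCore, relIndex_normalCore_subgroupOf_sup hNH, hj, hindex, mul_comm]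

theorem IsMinimalNormal.isModularFactor_of_le_center [Finite G] (hN : IsMinimalNormal N)
    (hcenter : N ≤ center G) : IsModularFactor k N where
  card_prime := hN.prime_card_of_le_center hcenter
  index_centralizer := ⟨2, 0, Nat.prime_two, k.zero_le, by
    rw [centralizer_eq_top_iff_subset.2 hcenter, index_top, pow_zero]⟩

theorem IsMinimalNormal.isModularFactor_of_modularStep [Finite G] (hN : IsMinimalNormal N)
    (hCH : centralizer (N : Set G) ⊔ H = ⊤) (hstep : ModularStep k H L) (hNH : ¬ N ≤ H)
    (hNL : N ≤ L) : IsModularFactor k N := by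
  have := hN.normal
  have hdisj : Disjoint N H := disjoint_iff.2 <| by_contra fun hne =>
    hNH (hN.le_of_inf_ne_bot (normal_inf_of_centralizer_sup_eq_top hCH) hne)
  obtain ⟨n, -, hnk, hHL, hnormal | ⟨r, q, hr, hq, -, hcard, rfl⟩⟩ := hstep
  · have hsup : N ⊔ H ≤ normalizer (H : Set G) :=
      (sup_le hNL hHL).trans ((normal_subgroupOf_iff_le_normalizer hHL).1 hnormal)
    have hHC : H ≤ centralizer (N : Set G) := (normal_subgroupOf_sup_iff hdisj).1
      ((normal_subgroupOf_iff_le_normalizer le_sup_right).2 hsup)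
    rw [sup_eq_left.2 hHC, centralizer_eq_top_iff_subset] at hCH
    exact hN.isModularFactor_of_le_center hCH
  · have hlt : H.subgroupOf L < (N ⊔ H).subgroupOf L :=
      ⟨comap_mono le_sup_right, fun hle => hNH fun x hx =>
        hle (show (⟨x, hNL hx⟩ : L) ∈ (N ⊔ H).subgroupOf L from mem_sup_left hx)⟩
    obtain rfl : N ⊔ H = L := le_antisymm (sup_le hNL hHL)
      (subgroupOf_eq_top.1 ((isCoatom_of_prime_index hr).2 _ hlt))
    have hindex : (H.subgroupOf (N ⊔ H)).index = Nat.card N := relIndex_sup_of_disjoint hdisj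
    rw [card_quotient_normalCore, relIndex_normalCore_subgroupOf_sup hdisj, mul_comm] at hcard
    refine ⟨hindex ▸ hr, q, n, hq, hnk, ?_⟩
    rw [← relIndex_top_right, ← hCH, relIndex_sup_left]
    exact Nat.eq_of_mul_eq_mul_left hr.pos hcard

theorem KSubmodularIn.exists_modularStep_of_not_le (hB : KSubmodularIn k B L) (hNB : ¬ N ≤ B)
    (hNL : N ≤ L) : ∃ H M, B ≤ H ∧ ¬ N ≤ H ∧ N ≤ M ∧ ModularStep k H M := by
  rw [kSubmodularIn_iff_reflTransGen] at hB
  induction hB using Relation.ReflTransGen.head_induction_on with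
  | refl => exact absurd hNL hNB
  | @head B M hstep _ ih =>
    by_cases hNM : N ≤ M
    · exact ⟨B, M, le_rfl, hNB, hNM, hstep⟩
    · obtain ⟨H, M', hMH, hH⟩ := ih hNM
      obtain ⟨n, -, -, hBM, -⟩ := hstep
      exact ⟨H, M', hBM.trans hMH, hH⟩

theorem IsMinimalNormal.isModularFactor_of_kSubmodularIn [Finite G] [Group.IsNilpotent B]
    (hN : IsMinimalNormal N) (hCB : centralizer (N : Set G) ⊔ B = ⊤) (hB : KSubmodularIn k B ⊤) :
    IsModularFactor k N := by
  have := hN.normal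
  by_cases hNB : N ≤ B
  · have hcenter : N ⊓ center G ≠ ⊥ := ne_bot_of_le_ne_bot (inf_centralizer_ne_bot hNB hN.ne_bot)
      (le_inf inf_le_left (inf_centralizer_le_center hCB))
    exact hN.isModularFactor_of_le_center (hN.le_of_inf_ne_bot inferInstance hcenter)
  · obtain ⟨H, L, hBH, hNH, hNL, hstep⟩ := hB.exists_modularStep_of_not_le hNB le_top
    exact hN.isModularFactor_of_modularStep
      (top_le_iff.1 (hCB ▸ sup_le_sup_left hBH _)) hstep hNH hNL

end ModularFactor

section Factorization

open Subgroup

variable {G : Type*} [Group G] {A B P K N A₁ B₁ Q R : Subgroup G}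

theorem index_dvd_card_of_mul_eq_univ (hAB : (A * B : Set G) = Set.univ) :
    B.index ∣ Nat.card A := by
  have horbit : MulAction.orbit A (QuotientGroup.mk 1 : G ⧸ B) = Set.univ := by
    refine Set.eq_univ_of_forall fun x => ?_
    obtain ⟨g, rfl⟩ := QuotientGroup.mk_surjective x
    obtain ⟨a, ha, b, hb, rfl⟩ := hAB.ge (Set.mem_univ g)
    exact ⟨⟨a, ha⟩, QuotientGroup.eq.2 (by simpa using hb)⟩
  rw [index_eq_card, ← Set.ncard_univ, ← horbit, ← MulAction.index_stabilizer]
  exact index_dvd_card _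

theorem index_dvd_card_mul_card [hP : P.Normal] (hQP : Q ≤ P) (hRP : R ≤ P)
    (hprod : (Q * (A₁ * B₁) * R : Set G) = Set.univ) :
    P.index ∣ Nat.card B₁ * Nat.card A₁ := by
  have hcover : (A₁ * (P ⊔ B₁ : Subgroup G) : Set G) = Set.univ := by
    refine Set.eq_univ_of_forall fun g => ?_
    obtain ⟨_, ⟨x, hx, _, ⟨a, ha, b, hb, rfl⟩, rfl⟩, y, hy, rfl⟩ := hprod.ge (Set.mem_univ g)
    have hconj : a⁻¹ * x * a ∈ P := hP.conj_mem' x (hQP hx) a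
    exact ⟨a, ha, a⁻¹ * x * a * b * y, mul_mem (mul_mem_sup hconj hb) (mem_sup_left (hRP hy)),
      by simp only [mul_assoc, mul_inv_cancel_left]⟩
  rw [← relIndex_mul_index (le_sup_left : P ≤ P ⊔ B₁), relIndex_sup_left]
  exact mul_dvd_mul (relIndex_dvd_card P B₁) (index_dvd_card_of_mul_eq_univ hcover)

theorem mul_eq_right_of_disjoint [hP : P.Normal] (hPK : Disjoint P K) (hQP : Q ≤ P)
    (hRP : R ≤ P) (hAK : A₁ ≤ K) (hBK : B₁ ≤ K)
    (hprod : (Q * (A₁ * B₁) * R : Set G) = Set.univ) : (A₁ * B₁ : Set G) = K := by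
  refine (mul_subset hAK hBK).antisymm fun g hg => ?_
  obtain ⟨_, ⟨x, hx, c, hc, rfl⟩, y, hy, rfl⟩ := hprod.ge (Set.mem_univ g)
  have hcK : c ∈ K := mul_subset hAK hBK hc
  have hzP : c⁻¹ * x * c * y ∈ P := mul_mem (hP.conj_mem' x (hQP hx) c) (hRP hy)
  have hxcy : x * c * y = c * (c⁻¹ * x * c * y) := by
    simp only [mul_assoc, mul_inv_cancel_left]
  have hzK : c⁻¹ * x * c * y ∈ K := (mul_mem_cancel_left hcK).1 (hxcy ▸ hg)
  change x * c * y ∈ (A₁ * B₁ : Set G)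
  rwa [hxcy, disjoint_def.1 hPK hzP hzK, mul_one]

theorem mul_eq_left_of_disjoint (hPK : Disjoint P K) (hQP : Q ≤ P)
    (hRP : R ≤ P) (hAK : A₁ ≤ K) (hBK : B₁ ≤ K)
    (hprod : (Q * (A₁ * B₁) * R : Set G) = Set.univ) : (Q * R : Set G) = P := by
  refine (mul_subset hQP hRP).antisymm fun g hg => ?_
  obtain ⟨_, ⟨x, hx, c, hc, rfl⟩, y, hy, rfl⟩ := hprod.ge (Set.mem_univ g)
  have hcP : c ∈ P := (mul_mem_cancel_left (hQP hx)).1 ((mul_mem_cancel_right (hRP hy)).1 hg)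
  obtain rfl : c = 1 := disjoint_def.1 hPK hcP (mul_subset hAK hBK hc)
  exact ⟨x, hx, y, hy, by simp only [mul_one]⟩

theorem exists_isComplement'_ge [Finite G] [P.Normal] [Group.IsNilpotent P]
    (hP : (Nat.card P).Coprime P.index) (hA : A ≤ normalizer (A₁ : Set G))
    (hB : B ≤ normalizer (B₁ : Set G)) (hPA : (Nat.card P).Coprime (Nat.card A₁))
    (hPB : (Nat.card P).Coprime (Nat.card B₁)) (hAB : (A * B : Set G) = Set.univ) :
    ∃ K : Subgroup G, IsComplement' P K ∧ A₁ ≤ K ∧ B₁ ≤ K := by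
  obtain ⟨K, hK⟩ := exists_right_complement'_of_coprime hP
  have hPK : (Nat.card P).Coprime (Nat.card K) := hK.symm.index_eq_card ▸ hP
  have hle : ∀ H : Subgroup G, H ≤ P ⊔ K := fun H => hK.sup_eq_top ▸ le_top
  obtain ⟨g, hg⟩ := exists_conj_mem_of_le_sup hPA hPK (hle A₁)
  obtain ⟨h, hh⟩ := exists_conj_mem_of_le_sup hPB hPK (hle B₁)
  -- With `g * h⁻¹ = a * b`, the conjugates of `K` by `a⁻¹ * g` and by `b * h` are one complement.
  obtain ⟨a, ha, b, hb, hab⟩ := hAB.ge (Set.mem_univ (g * h⁻¹))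
  have hgh : a⁻¹ * g = b * h := by
    rw [inv_mul_eq_iff_eq_mul, ← mul_assoc, ← mul_inv_eq_iff_eq_mul]
    exact hab.symm
  let t := MulAut.conj (a⁻¹ * g)
  have ht : t = MulAut.conj (b * h) := congrArg MulAut.conj hgh
  have hcard : Nat.card (t • K : Subgroup G) = Nat.card K :=
    Nat.card_congr (equivSMul t K).symm.toEquiv
  refine ⟨t • K, isComplement'_of_coprime (hcard ▸ hK.card_mul_card) (hcard ▸ hPK),
    fun x hx => ?_, fun x hx => ?_⟩
  · have hmem := hg _ (le_normalizer_iff.1 hA a ha x hx)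
    rw [mem_pointwise_smul_iff_inv_smul_mem]
    simpa [t, mul_assoc] using hmem
  · have hmem := hh _ (le_normalizer_iff.1 hB b⁻¹ (inv_mem hb) x hx)
    rw [mem_pointwise_smul_iff_inv_smul_mem, ht]
    simpa [mul_assoc] using hmem

theorem le_of_mul_eq (hAB : (A * B : Set G) = P) (hA : A ≤ K) (hB : B ≤ K) : P ≤ K := by
  rw [← SetLike.coe_subset_coe, ← hAB]
  exact mul_subset hA hB

theorem mul_mul_mul_eq_univ (hA : (Q * A₁ : Set G) = A) (hB : (R * B₁ : Set G) = B)
    (hAB : (A * B : Set G) = Set.univ) : (Q * (A₁ * B₁) * R : Set G) = Set.univ := by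
  have hBR : (B₁ * R : Set G) = B := by
    rw [← inv_coe_set (H := B), ← hB, mul_inv_rev, inv_coe_set, inv_coe_set]
  rw [← hAB, ← hA, ← hBR, mul_assoc, mul_assoc, mul_assoc]

theorem le_normalizer_of_mul_eq (hA : (Q * A₁ : Set G) = A) (hQA : A₁ ≤ centralizer (Q : Set G)) :
    A ≤ normalizer (A₁ : Set G) :=
  le_of_mul_eq hA ((le_centralizer_iff.1 hQA).trans (centralizer_le_normalizer _)) le_normalizer

theorem IsMinimalNormal.centralizer_sup_eq_top_or [Finite G] [P.Normal] [Group.IsNilpotent P]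
    (hN : IsMinimalNormal N) (hNP : N ≤ P) (hP : (Nat.card P).Coprime P.index) (hQP : Q ≤ P)
    (hRP : R ≤ P) (hPA : (Nat.card P).Coprime (Nat.card A₁))
    (hPB : (Nat.card P).Coprime (Nat.card B₁)) (hA : (Q * A₁ : Set G) = A)
    (hB : (R * B₁ : Set G) = B) (hQA : A₁ ≤ centralizer (Q : Set G))
    (hRB : B₁ ≤ centralizer (R : Set G)) (hAB : (A * B : Set G) = Set.univ) :
    centralizer (N : Set G) ⊔ A = ⊤ ∨ centralizer (N : Set G) ⊔ B = ⊤ := by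
  have hprod := mul_mul_mul_eq_univ hA hB hAB
  obtain ⟨K, hPK, hAK, hBK⟩ := exists_isComplement'_ge hP (le_normalizer_of_mul_eq hA hQA)
    (le_normalizer_of_mul_eq hB hRB) hPA hPB hAB
  have hPC : P ≤ centralizer (N : Set G) := le_centralizer_iff.1 (hN.le_centralizer_of_le hNP)
  have : IsMulCommutative N := le_centralizer_iff_isMulCommutative.1 (hNP.trans hPC)
  have hNK : (Nat.card N).Coprime (Nat.card K) :=
    hPK.symm.index_eq_card ▸ hP.coprime_dvd_left (card_dvd_of_le hNP)
  have hfac : (N : Set G) ⊆ centralizer (A₁ : Set G) * centralizer (B₁ : Set G) := by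
    refine Set.Subset.trans hNP ?_
    rw [← mul_eq_left_of_disjoint hPK.disjoint hQP hRP hAK hBK hprod]
    exact Set.mul_subset_mul (le_centralizer_iff.1 hQA) (le_centralizer_iff.1 hRB)
  have hCK : centralizer (N : Set G) ⊔ K = ⊤ :=
    top_le_iff.1 (hPK.sup_eq_top ▸ sup_le_sup_right hPC K)
  have hAB' : (A * B : Set G) = (⊤ : Subgroup G) := hAB.trans coe_top.symm
  rcases hN.le_centralizer_or_le_centralizer
    (mul_eq_right_of_disjoint hPK.disjoint hQP hRP hAK hBK hprod) hNK hfac hCK with hNA | hNB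
  · have hAC := le_of_mul_eq hA (hQP.trans hPC) (le_centralizer_iff.1 hNA)
    exact .inr (top_le_iff.1 (le_of_mul_eq hAB' (hAC.trans le_sup_left) le_sup_right))
  · have hBC := le_of_mul_eq hB (hRP.trans hPC) (le_centralizer_iff.1 hNB)
    exact .inl (top_le_iff.1 (le_of_mul_eq hAB' le_sup_right (hBC.trans le_sup_left)))

theorem exists_isMinimalNormal_centralizer_sup_eq_top [Finite G] {p : ℕ} [hp : Fact p.Prime]
    [Group.IsNilpotent A] [Group.IsNilpotent B] (hAB : (A * B : Set G) = Set.univ)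
    (hpG : p ∣ Nat.card G) (hA : pCore p A ≤ pCore p ⊤) (hB : pCore p B ≤ pCore p ⊤) :
    ∃ N : Subgroup G, IsMinimalNormal N ∧
      (centralizer (N : Set G) ⊔ A = ⊤ ∨ centralizer (N : Set G) ⊔ B = ⊤) := by
  obtain ⟨A₁, hpA, hAeq, hAcomm⟩ := exists_pCore_mul_eq (p := p) (H := A)
  obtain ⟨B₁, hpB, hBeq, hBcomm⟩ := exists_pCore_mul_eq (p := p) (H := B)
  let P : Subgroup G := pCore p ⊤
  have : P.Normal := normal_pCore_top
  have hpP : IsPGroup p P := isPGroup_pCore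
  have : Group.IsNilpotent P := hpP.isNilpotent
  have hindex : p.Coprime P.index := (hpB.mul_right hpA).coprime_dvd_right
    (index_dvd_card_mul_card hA hB (mul_mul_mul_eq_univ hAeq hBeq hAB))
  have hP1 : P ≠ ⊥ := fun hbot =>
    (Nat.Prime.coprime_iff_not_dvd hp.out).1 hindex (by rwa [hbot, index_bot])
  obtain ⟨i, hi⟩ := IsPGroup.iff_card.1 hpP
  have hcoprime {n : ℕ} (hn : p.Coprime n) : (Nat.card P).Coprime n := hi ▸ hn.pow_left i
  obtain ⟨N, hNP, hN⟩ := exists_isMinimalNormal_le hP1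
  exact ⟨N, hN, hN.centralizer_sup_eq_top_or hNP (hcoprime hindex) hA hB (hcoprime hpA)
    (hcoprime hpB) hAeq hBeq hAcomm hBcomm hAB⟩

theorem exists_isModularFactor [Finite G] [Nontrivial G] {k : ℕ} [Group.IsNilpotent A]
    [Group.IsNilpotent B] (hAB : (A * B : Set G) = Set.univ) (hA : KSubmodularIn k A ⊤)
    (hB : KSubmodularIn k B ⊤) : ∃ N : Subgroup G, N.Normal ∧ IsModularFactor k N := by
  obtain ⟨p, hpmem, hmax⟩ := (Nat.card G).primeFactors.exists_max_image id
    (Nat.nonempty_primeFactors.2 Finite.one_lt_card)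
  have : Fact p.Prime := ⟨Nat.prime_of_mem_primeFactors hpmem⟩
  have hlargest (q : ℕ) (hq : q.Prime) (hqG : q ∣ Nat.card G) : q ≤ p :=
    hmax q (Nat.mem_primeFactors.2 ⟨hq, hqG, Nat.card_pos.ne'⟩)
  obtain ⟨N, hN, hNA | hNB⟩ := exists_isMinimalNormal_centralizer_sup_eq_top hAB
    (Nat.dvd_of_mem_primeFactors hpmem) (hA.pCore_le_pCore hlargest) (hB.pCore_le_pCore hlargest)
  · exact ⟨N, hN.normal, hN.isModularFactor_of_kSubmodularIn hNA hA⟩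
  · exact ⟨N, hN.normal, hN.isModularFactor_of_kSubmodularIn hNB hB⟩

end Factorization

section Supersolvable

open Subgroup

variable {G G' : Type*} [Group G] [Group G']

theorem isCyclic_quotient_comap {f : G →* G'} (hf : Function.Surjective f) {H L : Subgroup G'}
    [(H.subgroupOf L).Normal] [((H.comap f).subgroupOf (L.comap f)).Normal]
    [IsCyclic (L ⧸ H.subgroupOf L)] :
    IsCyclic (L.comap f ⧸ (H.comap f).subgroupOf (L.comap f)) := by
  let φ := (QuotientGroup.mk' (H.subgroupOf L)).comp (f.subgroupComap L)
  have hφ : (H.comap f).subgroupOf (L.comap f) = φ.ker := by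
    rw [← MonoidHom.comap_ker, QuotientGroup.ker_mk']
    rfl
  have hφsurj : Function.Surjective φ :=
    (QuotientGroup.mk'_surjective _).comp (f.subgroupComap_surjective_of_surjective L hf)
  let e := QuotientGroup.liftEquiv _ (φ := φ) hφsurj hφ
  exact isCyclic_of_surjective e.symm e.symm.surjective

theorem isSupersolvable_of_subsingleton [Subsingleton G] : IsSupersolvable G :=
  ⟨0, fun _ => ⊥, rfl, Subsingleton.elim _ _, fun _ => inferInstance,
    fun _ hi => absurd hi (Nat.not_lt_zero _), fun _ hi => absurd hi (Nat.not_lt_zero _)⟩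

theorem isSupersolvable_of_quotient (N : Subgroup G) [N.Normal] [IsCyclic N]
    (h : IsSupersolvable (G ⧸ N)) : IsSupersolvable G := by
  obtain ⟨m, c, hbot, htop, hnormal, hmono, hcyclic⟩ := h
  let π := QuotientGroup.mk' N
  refine ⟨m + 1, fun i => i.casesOn ⊥ fun j => (c j).comap π, rfl, ?_, ?_, ?_, ?_⟩
  · change (c m).comap π = ⊤
    rw [htop, comap_top]
  · rintro (_ | i)
    exacts [inferInstanceAs (⊥ : Subgroup G).Normal, (hnormal i).comap π]
  · rintro (_ | i) hi
    exacts [bot_le, comap_mono (hmono i (Nat.lt_of_succ_lt_succ hi))]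
  · rintro (_ | i) hi _
    · have : IsCyclic ((c 0).comap π) := by
        rw [hbot, MonoidHom.comap_bot, QuotientGroup.ker_mk']
        infer_instance
      exact isCyclic_of_surjective _ (QuotientGroup.mk'_surjective _)
    · have := hnormal i
      have := hcyclic i (Nat.lt_of_succ_lt_succ hi)
      exact isCyclic_quotient_comap (QuotientGroup.mk'_surjective N)

end Supersolvable

section Main

open Subgroup

theorem IsModularFactor.kSubmodularIn_top {G : Type*} [Group G] {k : ℕ}
    {N H : Subgroup G} [N.Normal] (hk : 0 < k) (hN : IsModularFactor k N)
    (hH : KSubmodularIn k (H.map (QuotientGroup.mk' N)) ⊤) : KSubmodularIn k H ⊤ := by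
  have hsup := hH.comap (QuotientGroup.mk'_surjective N)
  rw [comap_map_eq, QuotientGroup.ker_mk', comap_top, sup_comm,
    kSubmodularIn_iff_reflTransGen] at hsup
  exact kSubmodularIn_iff_reflTransGen.2 (.head (hN.modularStep_sup hk) hsup)

theorem supersolvable_of_product_nilpotent_kSubmodular_general {G : Type*} [Group G]
    [Finite G] {k : ℕ} (hk : 0 < k) {A B : Subgroup G}
    (hA : Group.IsNilpotent ↥A) (hB : Group.IsNilpotent ↥B)
    (hprod : ∀ g : G, ∃ a ∈ A, ∃ b ∈ B, g = a * b)
    (hAsub : KSubmodularIn k A ⊤) (hBsub : KSubmodularIn k B ⊤) :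
    IsSupersolvable G ∧ ∀ H : Subgroup G, KSubmodularIn k H ⊤ := by
  induction hcard : Nat.card G using Nat.strong_induction_on generalizing G with
  | _ c ih =>
  rcases subsingleton_or_nontrivial G with _ | _
  · exact ⟨isSupersolvable_of_subsingleton, fun H =>
      kSubmodularIn_iff_reflTransGen.2 (Subsingleton.elim H ⊤ ▸ .refl)⟩
  have hAB : (A * B : Set G) = Set.univ := Set.eq_univ_of_forall fun g =>
    let ⟨a, ha, b, hb, hab⟩ := hprod g
    ⟨a, ha, b, hb, hab.symm⟩
  obtain ⟨N, _, hN⟩ := exists_isModularFactor hAB hAsub hBsub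
  have : Fact (Nat.card N).Prime := ⟨hN.card_prime⟩
  have : IsCyclic N := isCyclic_of_prime_card rfl
  have hN1 : N ≠ ⊥ := fun hbot => hN.card_prime.ne_one (card_eq_one.2 hbot)
  let π := QuotientGroup.mk' N
  have hπ : Function.Surjective π := QuotientGroup.mk'_surjective N
  have hnilpotent {H : Subgroup G} (_ : Group.IsNilpotent H) : Group.IsNilpotent (H.map π) :=
    Group.nilpotent_of_surjective (π.subgroupMap H) (π.subgroupMap_surjective H)
  have hsubmodular {H : Subgroup G} (hH : KSubmodularIn k H ⊤) : KSubmodularIn k (H.map π) ⊤ :=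
    map_top_of_surjective π hπ ▸ hH.map π
  have hprodπ (g : G ⧸ N) : ∃ a ∈ A.map π, ∃ b ∈ B.map π, g = a * b := by
    obtain ⟨g, rfl⟩ := hπ g
    obtain ⟨a, ha, b, hb, rfl⟩ := hprod g
    exact ⟨π a, mem_map_of_mem π ha, π b, mem_map_of_mem π hb, map_mul π a b⟩
  obtain ⟨hss, hall⟩ := ih _ (hcard ▸ card_quotient_lt hN1) (hnilpotent hA) (hnilpotent hB)
    hprodπ (hsubmodular hAsub) (hsubmodular hBsub) rfl
  exact ⟨isSupersolvable_of_quotient N hss, fun H => hN.kSubmodularIn_top hk (hall _)⟩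

end Main

/-- Theorem 6: if `G = AB` is the product of nilpotent subgroups `A` and `B`
which are both `k`-submodular in `G`, then `G` is supersoluble and every Sylow
subgroup of `G` is `k`-submodular in `G`. -/
theorem supersolvable_of_product_nilpotent_kSubmodular {G : Type*} [Group G]
    [Finite G] {k : ℕ} (hk : 0 < k) {A B : Subgroup G}
    (hA : Group.IsNilpotent ↥A) (hB : Group.IsNilpotent ↥B)
    (hprod : ∀ g : G, ∃ a ∈ A, ∃ b ∈ B, g = a * b)
    (hAsub : KSubmodularIn k A ⊤) (hBsub : KSubmodularIn k B ⊤) :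
    IsSupersolvable G ∧
      ∀ (p : ℕ) (P : Sylow p G), KSubmodularIn k (P : Subgroup G) ⊤ := by
  obtain ⟨hss, hall⟩ :=
    supersolvable_of_product_nilpotent_kSubmodular_general hk hA hB hprod hAsub hBsub
  exact ⟨hss, fun _ P => hall P⟩
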